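/- Let k ∈ ℕ, β ∈ (0,1), and set a := (kβ+1)/(1−β). Then there exists a constant C̃ = C̃(k,β) > 0 such that for every t > 0, every c > 0 and every continuous function y : [0,t] → ℝ satisfying y_s ≥ c s^a for all s ∈ (0,t], one has ∫_0^t ( I^k_s(y) )^β ds ≥ C̃ c^β t^a, where I^0_s(y) := y_s and I^k_s(y) := ∫_0^s I^{k−1}_r(y) dr is the k-fold iterated time integral. -/

import Mathlib

/-!
Integration preserves power lower bounds: if `I^j_s(y) ≥ d s^p` on `(0,t]` with `p ≥ 0`, then
`I^{j+1}_s(y) ≥ d/(p+1) s^{p+1}`.  After `k` steps, `I^k_s(y)` dominates `c D_k s^{a+k}`, where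
`D_k = ∏_{i=1}^k 1/(a+i)` (`iterInt_lower`).  Raising to the power `β` and integrating once more
yields `c^β D_k^β t^{(a+k)β+1} / ((a+k)β+1)`, and the fixed-point relation `(a+k)β+1 = a` turns
this into `(D_k^β / a) c^β t^a`.
-/

open MeasureTheory Real Set

noncomputable section

/-- The `k`-th iterated time integral of a path: `I^0_t(y) = y_t`,
`I^k_t(y) = ∫_0^t I^{k−1}_s(y) ds`. -/
def iterInt : ℕ → (ℝ → ℝ) → ℝ → ℝ
  | 0 => fun y t => y t
  | (k + 1) => fun y t => ∫ s in (0 : ℝ)..t, iterInt k y s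

/-- Iterated integrals stay continuous up to time `t`, so the integrals of them and of their `β`-th
powers are genuine rather than junk values. -/
lemma iterInt_continuousOn {t : ℝ} (ht : 0 < t) {y : ℝ → ℝ} (hy : ContinuousOn y (Icc 0 t))
    (j : ℕ) : ContinuousOn (iterInt j y) (Icc 0 t) := by
  induction j with
  | zero => exact hy
  | succ j ih =>
    have h := intervalIntegral.continuousOn_primitive_interval (μ := volume)
      (f := iterInt j y) (a := 0) (b := t)
      (by rw [uIcc_of_le ht.le]; exact ih.integrableOn_Icc)
    rw [uIcc_of_le ht.le] at h
    exact h

lemma integral_mul_rpow (d : ℝ) {p s : ℝ} (hp : 0 ≤ p) :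
    ∫ r in (0 : ℝ)..s, d * r ^ p = d / (p + 1) * s ^ (p + 1) := by
  rw [intervalIntegral.integral_const_mul, integral_rpow (Or.inl (by linarith)),
    Real.zero_rpow (by linarith)]
  ring

/-- A power lower bound on the open interval integrates; nothing is needed at the endpoint `0`,
which has measure zero. -/
lemma le_integral_of_rpow_le {d p s : ℝ} (hp : 0 ≤ p) (hs : 0 ≤ s) {f : ℝ → ℝ}
    (hf : ContinuousOn f (Icc 0 s)) (h : ∀ r ∈ Ioo 0 s, d * r ^ p ≤ f r) :
    d / (p + 1) * s ^ (p + 1) ≤ ∫ r in (0 : ℝ)..s, f r := by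
  rw [← integral_mul_rpow d hp]
  refine intervalIntegral.integral_mono_on_of_le_Ioo hs ?_ ?_ h
  · exact (intervalIntegral.intervalIntegrable_rpow' (by linarith)).const_mul d
  · exact ContinuousOn.intervalIntegrable (by rwa [uIcc_of_le hs])

/-- The constant `D` is chosen before `t`, `c` and the path, so it depends only on `a` and `j`;
the proof builds it as `D_j = ∏_{i=1}^j 1/(a+i)`. -/
lemma iterInt_lower {a : ℝ} (ha : 0 < a) (j : ℕ) :
    ∃ D : ℝ, 0 < D ∧ ∀ t : ℝ, 0 < t → ∀ c : ℝ, ∀ y : ℝ → ℝ, ContinuousOn y (Icc 0 t) →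
      (∀ s : ℝ, 0 < s → s ≤ t → c * s ^ a ≤ y s) →
      ∀ s : ℝ, 0 < s → s ≤ t → c * D * s ^ (a + j) ≤ iterInt j y s := by
  induction j with
  | zero =>
    refine ⟨1, one_pos, fun t _ c y _ h s hs hst => ?_⟩
    simpa [iterInt] using h s hs hst
  | succ j ih =>
    obtain ⟨D, hD, H⟩ := ih
    refine ⟨D / (a + j + 1), by positivity, fun t ht c y hy h s hs hst => ?_⟩
    have := le_integral_of_rpow_le (d := c * D) (p := a + j) (by positivity) hs.le
      ((iterInt_continuousOn ht hy j).mono (Icc_subset_Icc_right hst))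
      (fun r hr => H t ht c y hy h r hr.1 (hr.2.le.trans hst))
    rw [mul_div_assoc] at this
    rw [Nat.cast_succ, ← add_assoc]
    exact this

/-- lower bound for iterated integrals of paths dominating the extremal
Peano solution.  Let `k ∈ ℕ`, `β ∈ (0,1)` and `a = (kβ+1)/(1−β)`.  There is a constant
`C̃ = C̃(k,β) > 0` such that for every `t > 0`, `c > 0` and continuous `y : [0,t] → ℝ` with
`y_s ≥ c s^a` on `(0,t]`, one has `∫_0^t (I^k_s(y))^β ds ≥ C̃ c^β t^a`. -/
theorem stmt17 (k : ℕ) (β : ℝ) (hβ0 : 0 < β) (hβ1 : β < 1) :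
    ∃ C : ℝ, 0 < C ∧ ∀ t : ℝ, 0 < t → ∀ c : ℝ, 0 < c → ∀ y : ℝ → ℝ,
      ContinuousOn y (Icc 0 t) →
      (∀ s : ℝ, 0 < s → s ≤ t → c * s ^ (((k : ℝ) * β + 1) / (1 - β)) ≤ y s) →
      C * c ^ β * t ^ (((k : ℝ) * β + 1) / (1 - β)) ≤
        ∫ s in (0 : ℝ)..t, (iterInt k y s) ^ β := by
  set a : ℝ := ((k : ℝ) * β + 1) / (1 - β) with ha_def
  have h1 : 0 < 1 - β := by linarith
  have ha : 0 < a := by positivity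
  have hfix : (a + k) * β + 1 = a := by
    rw [ha_def]
    field_simp
    ring
  obtain ⟨D, hD, H⟩ := iterInt_lower ha k
  refine ⟨D ^ β / a, by positivity, fun t ht c hc y hy h => ?_⟩
  have hpow : ∀ s ∈ Ioo 0 t, (c * D) ^ β * s ^ ((a + k) * β) ≤ iterInt k y s ^ β := by
    intro s hs
    have hs0 : 0 < s := hs.1
    rw [Real.rpow_mul hs0.le, ← Real.mul_rpow (by positivity) (by positivity)]
    exact Real.rpow_le_rpow (by positivity) (H t ht c y hy h s hs0 hs.2.le) hβ0.le
  have key := le_integral_of_rpow_le (by positivity) ht.le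
    ((iterInt_continuousOn ht hy k).rpow_const fun _ _ => Or.inr hβ0.le) hpow
  rw [hfix, Real.mul_rpow hc.le hD.le] at key
  calc D ^ β / a * c ^ β * t ^ a = c ^ β * D ^ β / a * t ^ a := by ring
    _ ≤ _ := key

end
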